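/- arXiv:2404.03452 — 2 statements merged into one kernel-verified Lean document; each statement's English description precedes it below -/
import Mathlib

section
/- For a compactly supported function w : ℝ² → ℝ that is absolutely continuous in each variable with integrable partial derivatives, ‖w‖_{L²(ℝ²)} ≤ ‖∂w/∂x₁‖_{L¹(ℝ²)}^{1/2} · ‖∂w/∂x₂‖_{L¹(ℝ²)}^{1/2}. -/
open MeasureTheory Real

/-!
Along almost every horizontal line `w` is the integral of `∂w/∂x₁` from `-∞`, so `|w (x, y)|` is at
most `B y = ∫ |∂w/∂x₁ (t, y)| dt`; likewise `|w (x, y)| ≤ A x = ∫ |∂w/∂x₂ (x, t)| dt`. Multiplying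
the two bounds separates the variables: `w (x, y) ^ 2 ≤ A x * B y`, and Fubini integrates the right
side to the product of the two `L¹` norms.
-/

open Filter Set Topology

section Line

variable {f : ℝ → ℝ} {a : ℝ}

theorem integral_Iic_deriv_of_absolutelyContinuousOnInterval {m : ℝ}
    (hf : ∀ b ≤ a, AbsolutelyContinuousOnInterval f b a) (hf' : IntegrableOn (deriv f) (Iic a))
    (hm : Tendsto f atBot (𝓝 m)) : ∫ t in Iic a, deriv f t = f a - m := by
  refine tendsto_nhds_unique (intervalIntegral_tendsto_integral_Iic a hf' tendsto_id)
    ((hm.const_sub (f a)).congr' ?_)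
  filter_upwards [eventually_le_atBot a] with b hb
  exact (hf b hb).integral_deriv_eq_sub.symm

theorem abs_le_integral_abs_deriv_of_tendsto_atBot_zero
    (hf : ∀ b ≤ a, AbsolutelyContinuousOnInterval f b a) (hf' : Integrable fun t => |deriv f t|)
    (h0 : Tendsto f atBot (𝓝 0)) : |f a| ≤ ∫ t, |deriv f t| := by
  have hderiv : Integrable (deriv f) :=
    (integrable_norm_iff (aestronglyMeasurable_deriv f volume)).1 hf'
  calc |f a| = |∫ t in Iic a, deriv f t| := by
        rw [integral_Iic_deriv_of_absolutelyContinuousOnInterval hf hderiv.integrableOn h0,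
          sub_zero]
    _ ≤ ∫ t in Iic a, |deriv f t| := abs_integral_le_integral_abs
    _ ≤ ∫ t, |deriv f t| :=
        setIntegral_le_integral hf' (Eventually.of_forall fun _ => abs_nonneg _)

end Line

theorem integral_norm_sq_prod_le_integral_mul_integral {X Y E : Type*} [MeasurableSpace X]
    [MeasurableSpace Y] [SeminormedAddGroup E] {μ : Measure X} {ν : Measure Y} [SFinite μ]
    [SFinite ν] {f : X × Y → E} {A : X → ℝ} {B : Y → ℝ} (hA : Integrable A μ) (hB : Integrable B ν)
    (hfA : ∀ᵐ x ∂μ, ∀ y, ‖f (x, y)‖ ≤ A x) (hfB : ∀ᵐ y ∂ν, ∀ x, ‖f (x, y)‖ ≤ B y) :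
    ∫ z, ‖f z‖ ^ 2 ∂μ.prod ν ≤ (∫ x, A x ∂μ) * ∫ y, B y ∂ν := by
  rw [← integral_prod_mul]
  refine integral_mono_of_nonneg (Eventually.of_forall fun _ => sq_nonneg _) (hA.mul_prod hB) ?_
  filter_upwards [Measure.quasiMeasurePreserving_fst.ae hfA,
    Measure.quasiMeasurePreserving_snd.ae hfB] with z hzA hzB
  calc ‖f z‖ ^ 2 = ‖f z‖ * ‖f z‖ := sq _
    _ ≤ A z.1 * B z.2 := by gcongr; exacts [(norm_nonneg _).trans (hzA z.2), hzA z.2, hzB z.1]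

section CompactSupport

variable {X Y E : Type*} [TopologicalSpace X] [TopologicalSpace Y] [Zero E] {w : X × Y → E}

theorem hasCompactSupport_slice_fst [T1Space Y] (hw : HasCompactSupport w) (y : Y) :
    HasCompactSupport fun x => w (x, y) :=
  hw.comp_isClosedEmbedding <| .of_continuous_injective_isClosedMap (by fun_prop)
    (Prod.mk_left_injective y) (isClosedMap_prodMk_right y)

theorem hasCompactSupport_slice_snd [T1Space X] (hw : HasCompactSupport w) (x : X) :
    HasCompactSupport fun y => w (x, y) :=
  hw.comp_isClosedEmbedding <| .of_continuous_injective_isClosedMap (by fun_prop)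
    (Prod.mk_right_injective x) (isClosedMap_prodMk_left x)

theorem tendsto_atBot_zero_of_hasCompactSupport [LinearOrder X] [NoMinOrder X]
    [ClosedIicTopology X] [TopologicalSpace E] {f : X → E} (hf : HasCompactSupport f) :
    Tendsto f atBot (𝓝 0) :=
  hf.is_zero_at_infty.mono_left atBot_le_cocompact

end CompactSupport

section AbsolutelyContinuous

variable {E F : Type*} [NormedAddCommGroup E] [NormedSpace ℝ E] [NormedAddCommGroup F]
  [NormedSpace ℝ F]

theorem absolutelyContinuousOnInterval_slice_fst {w : ℝ × E → F} (hw : ContDiff ℝ 1 w) (y : E)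
    (a b : ℝ) : AbsolutelyContinuousOnInterval (fun x => w (x, y)) a b :=
  (hw.comp (contDiff_prodMk_left y)).contDiffOn.absolutelyContinuousOnInterval

theorem absolutelyContinuousOnInterval_slice_snd {w : E × ℝ → F} (hw : ContDiff ℝ 1 w) (x : E)
    (a b : ℝ) : AbsolutelyContinuousOnInterval (fun y => w (x, y)) a b :=
  (hw.comp (contDiff_prodMk_right x)).contDiffOn.absolutelyContinuousOnInterval

end AbsolutelyContinuous

section PartialDeriv

variable {𝕜 E F : Type*} [NontriviallyNormedField 𝕜] [NormedAddCommGroup E] [NormedSpace 𝕜 E]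
  [NormedAddCommGroup F] [NormedSpace 𝕜 F]

theorem deriv_slice_fst {w : 𝕜 × E → F} {z : 𝕜 × E} (hw : DifferentiableAt 𝕜 w z) :
    deriv (fun t => w (t, z.2)) z.1 = fderiv 𝕜 w z (1, 0) :=
  (hw.hasFDerivAt.comp_hasDerivAt z.1
    ((hasDerivAt_id z.1).prodMk (hasDerivAt_const z.1 z.2))).deriv

theorem deriv_slice_snd {w : E × 𝕜 → F} {z : E × 𝕜} (hw : DifferentiableAt 𝕜 w z) :
    deriv (fun t => w (z.1, t)) z.2 = fderiv 𝕜 w z (0, 1) :=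
  (hw.hasFDerivAt.comp_hasDerivAt z.2
    ((hasDerivAt_const z.2 z.1).prodMk (hasDerivAt_id z.2))).deriv

end PartialDeriv

theorem stmt_3_general {w : ℝ × ℝ → ℝ}
    (hac₁ : ∀ y a b, AbsolutelyContinuousOnInterval (fun x => w (x, y)) a b)
    (hac₂ : ∀ x a b, AbsolutelyContinuousOnInterval (fun y => w (x, y)) a b)
    (hlim₁ : ∀ y, Tendsto (fun x => w (x, y)) atBot (𝓝 0))
    (hlim₂ : ∀ x, Tendsto (fun y => w (x, y)) atBot (𝓝 0))
    (h₁ : Integrable fun z : ℝ × ℝ => |deriv (fun x => w (x, z.2)) z.1|)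
    (h₂ : Integrable fun z : ℝ × ℝ => |deriv (fun y => w (z.1, y)) z.2|) :
    (∫ z : ℝ × ℝ, (w z) ^ 2) ^ ((1 : ℝ) / 2) ≤
      (∫ z : ℝ × ℝ, |deriv (fun x => w (x, z.2)) z.1|) ^ ((1 : ℝ) / 2) *
        (∫ z : ℝ × ℝ, |deriv (fun y => w (z.1, y)) z.2|) ^ ((1 : ℝ) / 2) := by
  rw [Measure.volume_eq_prod] at h₁ h₂ ⊢
  have hbound₁ : ∀ᵐ y, ∀ x, ‖w (x, y)‖ ≤ ∫ t, |deriv (fun x => w (x, y)) t| :=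
    h₁.prod_left_ae.mono fun y hy x =>
      abs_le_integral_abs_deriv_of_tendsto_atBot_zero (fun b _ => hac₁ y b x) hy (hlim₁ y)
  have hbound₂ : ∀ᵐ x, ∀ y, ‖w (x, y)‖ ≤ ∫ t, |deriv (fun y => w (x, y)) t| :=
    h₂.prod_right_ae.mono fun x hx y =>
      abs_le_integral_abs_deriv_of_tendsto_atBot_zero (fun b _ => hac₂ x b y) hx (hlim₂ x)
  have hsq := integral_norm_sq_prod_le_integral_mul_integral
    h₂.integral_prod_left h₁.integral_prod_right hbound₂ hbound₁
  rw [← mul_rpow (by positivity) (by positivity), integral_prod_symm _ h₁,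
    integral_prod _ h₂, mul_comm]
  refine rpow_le_rpow (by positivity) ?_ (by norm_num)
  simpa only [norm_eq_abs, sq_abs] using hsq

theorem stmt_3 (w : ℝ × ℝ → ℝ)
    (hw : ContDiff ℝ 1 w) (hsupp : HasCompactSupport w)
    (h1 : Integrable (fun z : ℝ × ℝ => |fderiv ℝ w z (1, 0)|))
    (h2 : Integrable (fun z : ℝ × ℝ => |fderiv ℝ w z (0, 1)|)) :
    (∫ z : ℝ × ℝ, (w z) ^ 2) ^ ((1 : ℝ) / 2) ≤
      (∫ z : ℝ × ℝ, |fderiv ℝ w z (1, 0)|) ^ ((1 : ℝ) / 2) *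
        (∫ z : ℝ × ℝ, |fderiv ℝ w z (0, 1)|) ^ ((1 : ℝ) / 2) := by
  simp only [← deriv_slice_fst (hw.differentiable_one _),
    ← deriv_slice_snd (hw.differentiable_one _)] at h1 h2 ⊢
  exact stmt_3_general (absolutelyContinuousOnInterval_slice_fst hw)
    (absolutelyContinuousOnInterval_slice_snd hw)
    (fun y => tendsto_atBot_zero_of_hasCompactSupport (hasCompactSupport_slice_fst hsupp y))
    (fun x => tendsto_atBot_zero_of_hasCompactSupport (hasCompactSupport_slice_snd hsupp x)) h1 h2
end

section
/- Let 2 < q < 4 and u ∈ H¹(ℝ²) ∩ L^q(ℝ²). For every ε > 0 there is C_ε > 0 (independent of u) such that ∫∫ log(1+2/|x-y|) u(x)² u(y)² dx dy ≤ C ε^q ‖u‖_q^{2q} + C ε^{(5q-2)(q-2)/((4-q)(q-1))} ‖∇u‖₂² + C_ε ‖u‖₂^{2(3q-4)/(3(q-2))}. -/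
open MeasureTheory Real ENNReal

/-!
Since `log (1 + 2 / t) ≤ 2 / t`, it suffices to bound `∫∫ w(x) w(y) / ‖x - y‖`, `w = ‖u‖ ^ 2`. Put
`s = 2 / q`. The inequality `w(x) w(y) ≤ w(x)^(2-s) w(y)^s + w(y)^(2-s) w(x)^s` and the symmetry of
the kernel reduce it to `∫ w^(2-s)`, which Hölder interpolates between `∫ ‖u‖ ^ 2` and
`∫ ‖u‖ ^ q`, times a bound on `∫ w(y)^s / ‖x - y‖ dy` uniform in `x`. For the latter, Hölder's
inequality with weight `1 + ‖y - x‖` followed by an optimal dilation bounds it by powers of `∫ w`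
and `∫ w(y) / ‖x - y‖ dy`, and integrating `Dw` along the rays from `x` (the `L¹` Hardy inequality)
bounds the last integral by `∫ ‖Dw‖ ≤ 2 ‖u‖₂ ‖Du‖₂`. Young's inequality with exponents `q`,
`2q / (4 - q)` and `2q / (3 (q - 2))` separates the three resulting factors.
-/

section HalfLine

open Set

theorem enorm_le_lintegral_Ioi_enorm_deriv {V : Type*} [NormedAddCommGroup V] [NormedSpace ℝ V]
    [CompleteSpace V] {f : ℝ → V} {a : ℝ} (hf : Differentiable ℝ f)
    (hfin : ∫⁻ t in Ioi a, ‖f t‖ₑ ≠ ∞) :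
    ‖f a‖ₑ ≤ ∫⁻ t in Ioi a, ‖deriv f t‖ₑ := by
  rcases eq_or_ne (∫⁻ t in Ioi a, ‖deriv f t‖ₑ) ∞ with htop | htop
  · simp [htop]
  have hf_int : IntegrableOn f (Ioi a) := ⟨hf.continuous.aestronglyMeasurable, hfin.lt_top⟩
  have hderiv_int : IntegrableOn (deriv f) (Ioi a) :=
    ⟨aestronglyMeasurable_deriv f _, htop.lt_top⟩
  have hlim := tendsto_zero_of_hasDerivAt_of_integrableOn_Ioi
    (fun t _ => (hf t).hasDerivAt) hderiv_int hf_int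
  have hftc : ∫ t in Ioi a, deriv f t = 0 - f a :=
    integral_Ioi_of_hasDerivAt_of_tendsto' (fun t _ => (hf t).hasDerivAt) hderiv_int hlim
  calc ‖f a‖ₑ = ‖∫ t in Ioi a, deriv f t‖ₑ := by rw [hftc, zero_sub, enorm_neg]
    _ ≤ ∫⁻ t in Ioi a, ‖deriv f t‖ₑ := enorm_integral_le_lintegral_enorm _

theorem lintegral_Ioi_one_rpow_neg {a : ℝ} (ha : 1 < a) :
    ∫⁻ t in Ioi (1 : ℝ), ENNReal.ofReal t ^ (-a) = ENNReal.ofReal (a - 1)⁻¹ := by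
  have ha' : -a < -1 := by linarith
  calc ∫⁻ t in Ioi (1 : ℝ), ENNReal.ofReal t ^ (-a)
      = ∫⁻ t in Ioi (1 : ℝ), ENNReal.ofReal (t ^ (-a)) :=
        setLIntegral_congr_fun measurableSet_Ioi fun t ht =>
          ENNReal.ofReal_rpow_of_pos (zero_lt_one.trans ht)
    _ = ENNReal.ofReal (∫ t in Ioi (1 : ℝ), t ^ (-a)) :=
        (ofReal_integral_eq_lintegral_ofReal (integrableOn_Ioi_rpow_of_lt ha' one_pos)
          (ae_restrict_of_forall_mem measurableSet_Ioi fun t ht =>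
            Real.rpow_nonneg (zero_le_one.trans (le_of_lt ht)) _)).symm
    _ = ENNReal.ofReal (a - 1)⁻¹ := by
        rw [integral_Ioi_rpow_of_lt ha' one_pos, Real.one_rpow, neg_div, ← div_neg, one_div]
        congr 2
        ring

end HalfLine

section AddHaar

open Module Set

variable {E : Type*} [NormedAddCommGroup E] [NormedSpace ℝ E] [FiniteDimensional ℝ E]
  [MeasurableSpace E] [BorelSpace E] (μ : Measure E) [μ.IsAddHaarMeasure]

theorem lintegral_comp_smul_addHaar (f : E → ℝ≥0∞) {r : ℝ} (hr : 0 < r) :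
    ∫⁻ x, f (r • x) ∂μ = ENNReal.ofReal r ^ (-(finrank ℝ E : ℝ)) * ∫⁻ x, f x ∂μ := by
  have hconst : ENNReal.ofReal |(r ^ finrank ℝ E)⁻¹| =
      ENNReal.ofReal r ^ (-(finrank ℝ E : ℝ)) := by
    rw [abs_of_pos (by positivity), ENNReal.ofReal_rpow_of_pos hr, Real.rpow_neg hr.le,
      Real.rpow_natCast]
  rw [← hconst, ← smul_eq_mul, ← lintegral_smul_measure, ← Measure.map_addHaar_smul μ hr.ne',
    (measurableEmbedding_const_smul₀ hr.ne').lintegral_map]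

theorem lintegral_lintegral_Ioi_comp_smul (hd : 1 < finrank ℝ E) {f : E → ℝ≥0∞}
    (hf : Measurable f) :
    ∫⁻ x, (∫⁻ t in Ioi (1 : ℝ), f (t • x)) ∂μ =
      ENNReal.ofReal ((finrank ℝ E : ℝ) - 1)⁻¹ * ∫⁻ x, f x ∂μ := by
  have hmeas : Measurable fun p : E × ℝ => f (p.2 • p.1) :=
    hf.comp (measurable_snd.smul measurable_fst)
  calc ∫⁻ x, (∫⁻ t in Ioi (1 : ℝ), f (t • x)) ∂μ
      = ∫⁻ t in Ioi (1 : ℝ), ∫⁻ x, f (t • x) ∂μ := lintegral_lintegral_swap hmeas.aemeasurable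
    _ = ∫⁻ t in Ioi (1 : ℝ), ENNReal.ofReal t ^ (-(finrank ℝ E : ℝ)) * ∫⁻ x, f x ∂μ :=
        setLIntegral_congr_fun measurableSet_Ioi fun t ht =>
          lintegral_comp_smul_addHaar μ f (zero_lt_one.trans ht)
    _ = ENNReal.ofReal ((finrank ℝ E : ℝ) - 1)⁻¹ * ∫⁻ x, f x ∂μ := by
        rw [lintegral_mul_const _ (by fun_prop),
          lintegral_Ioi_one_rpow_neg (by exact_mod_cast hd)]

theorem lintegral_enorm_mul_inv_enorm_le {V : Type*} [NormedAddCommGroup V] [NormedSpace ℝ V]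
    [CompleteSpace V] (hd : 1 < finrank ℝ E) {w : E → V} (hw : Differentiable ℝ w)
    (hfin : ∫⁻ x, ‖w x‖ₑ ∂μ ≠ ∞) :
    ∫⁻ x, ‖w x‖ₑ * ‖x‖ₑ⁻¹ ∂μ ≤
      ENNReal.ofReal ((finrank ℝ E : ℝ) - 1)⁻¹ * ∫⁻ x, ‖fderiv ℝ w x‖ₑ ∂μ := by
  have hw_meas : Measurable fun x => ‖w x‖ₑ := hw.continuous.enorm.measurable
  have hdw_meas : Measurable fun x => ‖fderiv ℝ w x‖ₑ := (measurable_fderiv ℝ w).enorm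
  have hray : ∀ᵐ x ∂μ, ∫⁻ t in Ioi (1 : ℝ), ‖w (t • x)‖ₑ < ∞ := by
    have hmeas : Measurable fun p : E × ℝ => ‖w (p.2 • p.1)‖ₑ :=
      hw_meas.comp (measurable_snd.smul measurable_fst)
    refine ae_lt_top hmeas.lintegral_prod_right' ?_
    rw [lintegral_lintegral_Ioi_comp_smul μ hd hw_meas]
    exact ENNReal.mul_ne_top ENNReal.ofReal_ne_top hfin
  rw [← lintegral_lintegral_Ioi_comp_smul μ hd hdw_meas]
  refine lintegral_mono_ae (hray.mono fun x hx => ?_)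
  have hderiv (t : ℝ) : HasDerivAt (fun t : ℝ => w (t • x)) (fderiv ℝ w (t • x) x) t := by
    have hline : HasDerivAt (fun t : ℝ => t • x) x t := by
      simpa using (hasDerivAt_id t).smul_const x
    exact (hw (t • x)).hasFDerivAt.comp_hasDerivAt t hline
  have hline_meas : Measurable fun t : ℝ => t • x := by fun_prop
  have hwx : ‖w x‖ₑ ≤ (∫⁻ t in Ioi (1 : ℝ), ‖fderiv ℝ w (t • x)‖ₑ) * ‖x‖ₑ :=
    calc ‖w x‖ₑ = ‖w ((1 : ℝ) • x)‖ₑ := by rw [one_smul]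
      _ ≤ ∫⁻ t in Ioi (1 : ℝ), ‖deriv (fun t : ℝ => w (t • x)) t‖ₑ :=
        enorm_le_lintegral_Ioi_enorm_deriv (fun t => (hderiv t).differentiableAt) hx.ne
      _ ≤ ∫⁻ t in Ioi (1 : ℝ), ‖fderiv ℝ w (t • x)‖ₑ * ‖x‖ₑ :=
        lintegral_mono fun t => (hderiv t).deriv ▸ ContinuousLinearMap.le_opENorm _ _
      _ = (∫⁻ t in Ioi (1 : ℝ), ‖fderiv ℝ w (t • x)‖ₑ) * ‖x‖ₑ :=
        lintegral_mul_const _ (hdw_meas.comp hline_meas)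
  calc ‖w x‖ₑ * ‖x‖ₑ⁻¹
      ≤ (∫⁻ t in Ioi (1 : ℝ), ‖fderiv ℝ w (t • x)‖ₑ) * (‖x‖ₑ * ‖x‖ₑ⁻¹) := by
        rw [← mul_assoc]; gcongr
    _ ≤ ∫⁻ t in Ioi (1 : ℝ), ‖fderiv ℝ w (t • x)‖ₑ :=
        mul_le_of_le_one_right' (ENNReal.mul_inv_le_one _)

theorem integrable_one_add_norm_rpow_mul_inv_norm (hd : 1 < finrank ℝ E) {σ : ℝ}
    (hσ : (finrank ℝ E : ℝ) - 1 < σ) :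
    Integrable (fun x : E => (1 + ‖x‖) ^ (-σ) * ‖x‖⁻¹) μ := by
  have : Nontrivial E := Module.nontrivial_of_finrank_pos (zero_lt_one.trans hd)
  rw [integrable_fun_norm_addHaar μ (f := fun r : ℝ => (1 + r) ^ (-σ) * r⁻¹)]
  obtain ⟨k, hk⟩ : ∃ k : ℕ, finrank ℝ E = k + 2 := ⟨finrank ℝ E - 2, by omega⟩
  rw [hk] at hσ ⊢
  push_cast at hσ
  have hdom : IntegrableOn (fun r : ℝ => (1 + ‖r‖) ^ (-(σ - k))) (Ioi 0) :=
    (integrable_one_add_norm (by rw [finrank_self]; push_cast; linarith)).integrableOn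
  refine hdom.mono' (by fun_prop) (ae_restrict_of_forall_mem measurableSet_Ioi fun r hr => ?_)
  have hr : 0 < r := hr
  have hcancel : r ^ (k + 2 - 1) • ((1 + r) ^ (-σ) * r⁻¹) = r ^ k * (1 + r) ^ (-σ) := by
    rw [smul_eq_mul, Nat.add_succ_sub_one, pow_succ]
    field_simp
  rw [hcancel, Real.norm_of_nonneg (by positivity), Real.norm_of_nonneg hr.le]
  calc r ^ k * (1 + r) ^ (-σ) ≤ (1 + r) ^ k * (1 + r) ^ (-σ) := by gcongr; linarith
    _ = (1 + r) ^ (-(σ - k)) := by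
      rw [← Real.rpow_natCast, ← Real.rpow_add (by positivity)]
      ring_nf

theorem lintegral_one_add_enorm_rpow_mul_inv_enorm_ne_top (hd : 1 < finrank ℝ E) {σ : ℝ}
    (hσ : (finrank ℝ E : ℝ) - 1 < σ) :
    ∫⁻ x : E, (1 + ‖x‖ₑ) ^ (-σ) * ‖x‖ₑ⁻¹ ∂μ ≠ ∞ := by
  have : Nontrivial E := Module.nontrivial_of_finrank_pos (zero_lt_one.trans hd)
  refine ne_of_eq_of_ne (lintegral_congr_ae ?_)
    (integrable_one_add_norm_rpow_mul_inv_norm μ hd hσ).2.ne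
  filter_upwards [Measure.ae_ne μ 0] with x hx
  rw [enorm_mul, enorm_inv (norm_ne_zero_iff.2 hx), enorm_norm,
    Real.enorm_of_nonneg (by positivity), ← ENNReal.ofReal_rpow_of_pos (by positivity),
    ENNReal.ofReal_add zero_le_one (norm_nonneg x), ENNReal.ofReal_one, ofReal_norm]

end AddHaar

section Dilation

open Module

variable {E : Type*} [NormedAddCommGroup E] [MeasurableSpace E] [BorelSpace E] (μ : Measure E)

theorem lintegral_rpow_mul_inv_enorm_le_add_rpow_mul {f : E → ℝ≥0∞} (hf : Measurable f) {s : ℝ}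
    (hs₀ : 0 < s) (hs₁ : s < 1) :
    ∫⁻ x, f x ^ s * ‖x‖ₑ⁻¹ ∂μ ≤ (∫⁻ x, f x * ‖x‖ₑ⁻¹ ∂μ + ∫⁻ x, f x ∂μ) ^ s *
      (∫⁻ x, (1 + ‖x‖ₑ) ^ (-(s / (1 - s))) * ‖x‖ₑ⁻¹ ∂μ) ^ (1 - s) := by
  have hs₁' : 0 < 1 - s := by linarith
  have hweight (x : E) : f x ^ s * ‖x‖ₑ⁻¹ = (f x * ((1 + ‖x‖ₑ) * ‖x‖ₑ⁻¹)) ^ s *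
      ((1 + ‖x‖ₑ) ^ (-(s / (1 - s))) * ‖x‖ₑ⁻¹) ^ (1 - s) := by
    have hone : (1 + ‖x‖ₑ) ^ s * (1 + ‖x‖ₑ) ^ (-s) = 1 := by
      rw [← ENNReal.rpow_add _ _ (by simp) (by simp), add_neg_cancel, ENNReal.rpow_zero]
    have hsplit : ‖x‖ₑ⁻¹ = ‖x‖ₑ⁻¹ ^ s * ‖x‖ₑ⁻¹ ^ (1 - s) := by
      rw [← ENNReal.rpow_add_of_nonneg _ _ hs₀.le hs₁'.le, add_sub_cancel, ENNReal.rpow_one]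
    have hexp : -(s / (1 - s)) * (1 - s) = -s := by field_simp
    rw [ENNReal.mul_rpow_of_nonneg _ _ hs₀.le, ENNReal.mul_rpow_of_nonneg _ _ hs₀.le,
      ENNReal.mul_rpow_of_nonneg _ _ hs₁'.le, ← ENNReal.rpow_mul, hexp]
    calc f x ^ s * ‖x‖ₑ⁻¹
        = f x ^ s * ((1 + ‖x‖ₑ) ^ s * (1 + ‖x‖ₑ) ^ (-s)) *
            (‖x‖ₑ⁻¹ ^ s * ‖x‖ₑ⁻¹ ^ (1 - s)) := by rw [hone, mul_one, ← hsplit]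
      _ = _ := by ring
  have hsum : ∫⁻ x, f x * ((1 + ‖x‖ₑ) * ‖x‖ₑ⁻¹) ∂μ ≤
      ∫⁻ x, f x * ‖x‖ₑ⁻¹ ∂μ + ∫⁻ x, f x ∂μ := by
    rw [← lintegral_add_right _ hf]
    refine lintegral_mono fun x => ?_
    calc f x * ((1 + ‖x‖ₑ) * ‖x‖ₑ⁻¹) = f x * ‖x‖ₑ⁻¹ + f x * (‖x‖ₑ * ‖x‖ₑ⁻¹) := by ring
      _ ≤ f x * ‖x‖ₑ⁻¹ + f x := by
        gcongr
        exact mul_le_of_le_one_right' (ENNReal.mul_inv_le_one _)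
  simp only [hweight]
  refine (ENNReal.lintegral_mul_norm_pow_le (by fun_prop) (by fun_prop) hs₀.le hs₁'.le
    (add_sub_cancel s 1)).trans ?_
  gcongr

variable [NormedSpace ℝ E] [FiniteDimensional ℝ E] [μ.IsAddHaarMeasure]

theorem lintegral_comp_smul_mul_inv_enorm (f : E → ℝ≥0∞) {r : ℝ} (hr : 0 < r) :
    ∫⁻ x, f (r • x) * ‖x‖ₑ⁻¹ ∂μ =
      ENNReal.ofReal r ^ (1 - (finrank ℝ E : ℝ)) * ∫⁻ x, f x * ‖x‖ₑ⁻¹ ∂μ := by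
  have hr₀ : ENNReal.ofReal r ≠ 0 := by simpa using hr
  have hinv (x : E) : ‖x‖ₑ⁻¹ = ENNReal.ofReal r * ‖r • x‖ₑ⁻¹ := by
    rw [enorm_smul, Real.enorm_of_nonneg hr.le,
      ENNReal.mul_inv (.inl hr₀) (.inl ENNReal.ofReal_ne_top), ← mul_assoc,
      ENNReal.mul_inv_cancel hr₀ ENNReal.ofReal_ne_top, one_mul]
  calc ∫⁻ x, f (r • x) * ‖x‖ₑ⁻¹ ∂μ
      = ∫⁻ x, ENNReal.ofReal r * (f (r • x) * ‖r • x‖ₑ⁻¹) ∂μ :=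
        lintegral_congr fun x => by rw [hinv x, mul_left_comm]
    _ = ENNReal.ofReal r * (ENNReal.ofReal r ^ (-(finrank ℝ E : ℝ)) *
          ∫⁻ x, f x * ‖x‖ₑ⁻¹ ∂μ) := by
        rw [lintegral_const_mul' _ _ ENNReal.ofReal_ne_top,
          lintegral_comp_smul_addHaar μ (fun x => f x * ‖x‖ₑ⁻¹) hr]
    _ = ENNReal.ofReal r ^ (1 - (finrank ℝ E : ℝ)) * ∫⁻ x, f x * ‖x‖ₑ⁻¹ ∂μ := by
        rw [← mul_assoc, sub_eq_add_neg, ENNReal.rpow_add _ _ hr₀ ENNReal.ofReal_ne_top,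
          ENNReal.rpow_one]

theorem lintegral_rpow_mul_inv_enorm_le_rpow_mul_add_rpow_mul {f : E → ℝ≥0∞} (hf : Measurable f)
    {s : ℝ} (hs₀ : 0 < s) (hs₁ : s < 1) {c : ℝ≥0∞} (hc₀ : c ≠ 0) (hc : c ≠ ∞) :
    ∫⁻ x, f x ^ s * ‖x‖ₑ⁻¹ ∂μ ≤
      c ^ (((finrank ℝ E : ℝ) - 1) * (1 - s)) *
        (∫⁻ x, f x * ‖x‖ₑ⁻¹ ∂μ + c⁻¹ * ∫⁻ x, f x ∂μ) ^ s *
      (∫⁻ x, (1 + ‖x‖ₑ) ^ (-(s / (1 - s))) * ‖x‖ₑ⁻¹ ∂μ) ^ (1 - s) := by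
  obtain ⟨r, hr, rfl⟩ : ∃ r : ℝ, 0 < r ∧ ENNReal.ofReal r = c :=
    ⟨c.toReal, ENNReal.toReal_pos hc₀ hc, ENNReal.ofReal_toReal hc⟩
  have hdilated := lintegral_rpow_mul_inv_enorm_le_add_rpow_mul μ
    (hf.comp (measurable_const_smul r)) hs₀ hs₁
  simp only [Function.comp_apply] at hdilated
  rw [lintegral_comp_smul_mul_inv_enorm μ (fun x => f x ^ s) hr,
    lintegral_comp_smul_mul_inv_enorm μ f hr, lintegral_comp_smul_addHaar μ f hr] at hdilated
  set c := ENNReal.ofReal r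
  set d : ℝ := (finrank ℝ E : ℝ)
  set L := ∫⁻ x, f x ^ s * ‖x‖ₑ⁻¹ ∂μ
  set H := ∫⁻ x, f x * ‖x‖ₑ⁻¹ ∂μ
  set M := ∫⁻ x, f x ∂μ
  set J := ∫⁻ x, (1 + ‖x‖ₑ) ^ (-(s / (1 - s))) * ‖x‖ₑ⁻¹ ∂μ
  have hfactor : c ^ (1 - d) * H + c ^ (-d) * M = c ^ (1 - d) * (H + c⁻¹ * M) := by
    rw [mul_add, ← mul_assoc, ← ENNReal.rpow_neg_one c, ← ENNReal.rpow_add _ _ hc₀ hc]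
    ring_nf
  calc L = c ^ (d - 1) * (c ^ (1 - d) * L) := by
        rw [← mul_assoc, ← ENNReal.rpow_add _ _ hc₀ hc]
        simp
    _ ≤ c ^ (d - 1) * ((c ^ (1 - d) * (H + c⁻¹ * M)) ^ s * J ^ (1 - s)) := by
        rw [← hfactor]
        gcongr
    _ = c ^ ((d - 1) * (1 - s)) * (H + c⁻¹ * M) ^ s * J ^ (1 - s) := by
        rw [ENNReal.mul_rpow_of_nonneg _ _ hs₀.le, ← ENNReal.rpow_mul, ← mul_assoc, ← mul_assoc,
          ← ENNReal.rpow_add _ _ hc₀ hc]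
        ring_nf

theorem lintegral_rpow_mul_inv_enorm_le_of_ne_zero_of_ne_top {f : E → ℝ≥0∞} (hf : Measurable f)
    {s : ℝ} (hd : 1 < finrank ℝ E) (hs₀ : 0 < s) (hs₁ : s < 1)
    (hM₀ : ∫⁻ x, f x ∂μ ≠ 0) (hM : ∫⁻ x, f x ∂μ ≠ ∞)
    (hH₀ : ∫⁻ x, f x * ‖x‖ₑ⁻¹ ∂μ ≠ 0) (hH : ∫⁻ x, f x * ‖x‖ₑ⁻¹ ∂μ ≠ ∞) :
    ∫⁻ x, f x ^ s * ‖x‖ₑ⁻¹ ∂μ ≤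
      2 ^ s * (∫⁻ x, (1 + ‖x‖ₑ) ^ (-(s / (1 - s))) * ‖x‖ₑ⁻¹ ∂μ) ^ (1 - s) *
        (∫⁻ x, f x ∂μ) ^ (((finrank ℝ E : ℝ) - 1) * (1 - s)) *
          (∫⁻ x, f x * ‖x‖ₑ⁻¹ ∂μ) ^ (1 - finrank ℝ E * (1 - s)) := by
  have hd' : 1 < (finrank ℝ E : ℝ) := by exact_mod_cast hd
  have hdilate := lintegral_rpow_mul_inv_enorm_le_rpow_mul_add_rpow_mul μ hf hs₀ hs₁
    (ENNReal.div_ne_zero.2 ⟨hM₀, hH⟩) (ENNReal.div_ne_top hM hH₀)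
  set d : ℝ := (finrank ℝ E : ℝ)
  set J := ∫⁻ x, (1 + ‖x‖ₑ) ^ (-(s / (1 - s))) * ‖x‖ₑ⁻¹ ∂μ
  set H := ∫⁻ x, f x * ‖x‖ₑ⁻¹ ∂μ
  set M := ∫⁻ x, f x ∂μ
  have hbalance : (M / H)⁻¹ * M = H := by
    rw [ENNReal.inv_div (.inl hH) (.inl hH₀), ENNReal.div_mul_cancel hM₀ hM]
  have hquot : (M / H) ^ ((d - 1) * (1 - s)) =
      M ^ ((d - 1) * (1 - s)) * H ^ (-((d - 1) * (1 - s))) := by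
    rw [ENNReal.div_rpow_of_nonneg _ _ (mul_nonneg (by linarith) (by linarith)),
      ENNReal.rpow_neg, div_eq_mul_inv]
  have hH_exp : H ^ (-((d - 1) * (1 - s))) * H ^ s = H ^ (1 - d * (1 - s)) := by
    rw [← ENNReal.rpow_add _ _ hH₀ hH]
    ring_nf
  rw [hbalance, ← two_mul, ENNReal.mul_rpow_of_nonneg _ _ hs₀.le, hquot] at hdilate
  calc ∫⁻ x, f x ^ s * ‖x‖ₑ⁻¹ ∂μ
      ≤ M ^ ((d - 1) * (1 - s)) * H ^ (-((d - 1) * (1 - s))) * (2 ^ s * H ^ s) *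
          J ^ (1 - s) := hdilate
    _ = 2 ^ s * J ^ (1 - s) * M ^ ((d - 1) * (1 - s)) *
          (H ^ (-((d - 1) * (1 - s))) * H ^ s) := by ring
    _ = 2 ^ s * J ^ (1 - s) * M ^ ((d - 1) * (1 - s)) * H ^ (1 - d * (1 - s)) := by rw [hH_exp]

theorem exists_lintegral_rpow_mul_inv_enorm_le (hd : 1 < finrank ℝ E) {s : ℝ} (hs₁ : s < 1)
    (hs : finrank ℝ E * (1 - s) < 1) :
    ∃ C ≠ ∞, ∀ f : E → ℝ≥0∞, Measurable f →
      ∫⁻ x, f x ^ s * ‖x‖ₑ⁻¹ ∂μ ≤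
        C * (∫⁻ x, f x ∂μ) ^ (((finrank ℝ E : ℝ) - 1) * (1 - s)) *
          (∫⁻ x, f x * ‖x‖ₑ⁻¹ ∂μ) ^ (1 - finrank ℝ E * (1 - s)) := by
  have hd' : 1 < (finrank ℝ E : ℝ) := by exact_mod_cast hd
  have hs₁' : 0 < 1 - s := by linarith
  have hs₀ : 0 < s := by nlinarith
  have hJ := lintegral_one_add_enorm_rpow_mul_inv_enorm_ne_top μ hd (σ := s / (1 - s))
    (by rw [lt_div_iff₀ hs₁']; linarith)
  have hexp₁ : 0 < ((finrank ℝ E : ℝ) - 1) * (1 - s) := mul_pos (by linarith) hs₁'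
  have hexp₂ : 0 < 1 - finrank ℝ E * (1 - s) := by linarith
  set J := ∫⁻ x : E, (1 + ‖x‖ₑ) ^ (-(s / (1 - s))) * ‖x‖ₑ⁻¹ ∂μ
  -- Adding `1` keeps the constant positive, so that the bound is trivial when a factor is infinite.
  have hC : 2 ^ s * (J + 1) ^ (1 - s) ≠ 0 := by simp [ENNReal.rpow_eq_zero_iff, hs₀.not_gt, hJ]
  refine ⟨2 ^ s * (J + 1) ^ (1 - s), by finiteness, fun f hf => ?_⟩
  have hzero (h : f =ᵐ[μ] 0) : ∫⁻ x, f x ^ s * ‖x‖ₑ⁻¹ ∂μ = 0 := by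
    rw [lintegral_eq_zero_iff (by fun_prop)]
    filter_upwards [h] with x hx
    simp [hx, hs₀]
  rcases eq_or_ne (∫⁻ x, f x ∂μ) 0 with hM₀ | hM₀
  · simp [hzero ((lintegral_eq_zero_iff hf).1 hM₀)]
  rcases eq_or_ne (∫⁻ x, f x * ‖x‖ₑ⁻¹ ∂μ) 0 with hH₀ | hH₀
  · rw [lintegral_eq_zero_iff (by fun_prop)] at hH₀
    have hf₀ : f =ᵐ[μ] 0 := hH₀.mono fun x hx => by simpa using hx
    simp [hzero hf₀]
  rcases eq_or_ne (∫⁻ x, f x ∂μ) ∞ with hM | hM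
  · have hH_pow : (∫⁻ x, f x * ‖x‖ₑ⁻¹ ∂μ) ^ (1 - finrank ℝ E * (1 - s)) ≠ 0 := by
      simp [ENNReal.rpow_eq_zero_iff, hH₀, hexp₂.not_gt]
    simp [hM, ENNReal.top_rpow_of_pos hexp₁, ENNReal.mul_top hC, ENNReal.top_mul hH_pow]
  rcases eq_or_ne (∫⁻ x, f x * ‖x‖ₑ⁻¹ ∂μ) ∞ with hH | hH
  · have hM_pow : (∫⁻ x, f x ∂μ) ^ (((finrank ℝ E : ℝ) - 1) * (1 - s)) ≠ 0 := by
      simp [ENNReal.rpow_eq_zero_iff, hM₀, hexp₁.not_gt]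
    simp [hH, ENNReal.top_rpow_of_pos hexp₂, ENNReal.mul_top (mul_ne_zero hC hM_pow)]
  refine (lintegral_rpow_mul_inv_enorm_le_of_ne_zero_of_ne_top μ hf hd hs₀ hs₁
    hM₀ hM hH₀ hH).trans ?_
  gcongr
  exact le_self_add

end Dilation

section Potential

open Module

variable {E V : Type*} [NormedAddCommGroup E] [NormedSpace ℝ E] [FiniteDimensional ℝ E]
  [MeasurableSpace E] [BorelSpace E] [NormedAddCommGroup V] [NormedSpace ℝ V] [CompleteSpace V]
  (μ : Measure E) [μ.IsAddHaarMeasure]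

theorem exists_lintegral_enorm_rpow_mul_inv_enorm_sub_le (hd : 1 < finrank ℝ E) {s : ℝ}
    (hs₁ : s < 1) (hs : finrank ℝ E * (1 - s) < 1) :
    ∃ C ≠ ∞, ∀ w : E → V, Differentiable ℝ w → ∫⁻ y, ‖w y‖ₑ ∂μ ≠ ∞ → ∀ x,
      ∫⁻ y, ‖w y‖ₑ ^ s * ‖x - y‖ₑ⁻¹ ∂μ ≤
        C * (∫⁻ y, ‖w y‖ₑ ∂μ) ^ (((finrank ℝ E : ℝ) - 1) * (1 - s)) *
          (∫⁻ y, ‖fderiv ℝ w y‖ₑ ∂μ) ^ (1 - finrank ℝ E * (1 - s)) := by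
  obtain ⟨C, hC, hbound⟩ := exists_lintegral_rpow_mul_inv_enorm_le μ hd hs₁ hs
  have hexp : 0 ≤ 1 - finrank ℝ E * (1 - s) := by linarith
  set κ := ENNReal.ofReal ((finrank ℝ E : ℝ) - 1)⁻¹
  refine ⟨C * κ ^ (1 - finrank ℝ E * (1 - s)), by finiteness, fun w hw hfin x => ?_⟩
  let v : E → V := fun y => w (y + x)
  have hv : Differentiable ℝ v := hw.comp (differentiable_id.add_const x)
  have hv_int : ∫⁻ y, ‖v y‖ₑ ∂μ = ∫⁻ y, ‖w y‖ₑ ∂μ :=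
    lintegral_add_right_eq_self (fun y => ‖w y‖ₑ) x
  have hdv_int : ∫⁻ y, ‖fderiv ℝ v y‖ₑ ∂μ = ∫⁻ y, ‖fderiv ℝ w y‖ₑ ∂μ := by
    simp only [v, fderiv_comp_add_right]
    exact lintegral_add_right_eq_self (fun y => ‖fderiv ℝ w y‖ₑ) x
  have hcenter : ∫⁻ y, ‖w y‖ₑ ^ s * ‖x - y‖ₑ⁻¹ ∂μ = ∫⁻ y, ‖v y‖ₑ ^ s * ‖y‖ₑ⁻¹ ∂μ := by
    rw [← lintegral_add_right_eq_self (fun y => ‖w y‖ₑ ^ s * ‖x - y‖ₑ⁻¹) x]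
    simp [v]
  have hhardy := lintegral_enorm_mul_inv_enorm_le μ hd hv (by rwa [hv_int])
  rw [hdv_int] at hhardy
  rw [hcenter]
  refine (hbound _ hv.continuous.enorm.measurable).trans ?_
  rw [hv_int]
  set G := ∫⁻ y, ‖fderiv ℝ w y‖ₑ ∂μ
  set M := ∫⁻ y, ‖w y‖ₑ ∂μ
  calc C * M ^ (((finrank ℝ E : ℝ) - 1) * (1 - s)) *
        (∫⁻ y, ‖v y‖ₑ * ‖y‖ₑ⁻¹ ∂μ) ^ (1 - finrank ℝ E * (1 - s))
      ≤ C * M ^ (((finrank ℝ E : ℝ) - 1) * (1 - s)) *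
          (κ * G) ^ (1 - finrank ℝ E * (1 - s)) := by gcongr
    _ = C * κ ^ (1 - finrank ℝ E * (1 - s)) * M ^ (((finrank ℝ E : ℝ) - 1) * (1 - s)) *
          G ^ (1 - finrank ℝ E * (1 - s)) := by
        rw [ENNReal.mul_rpow_of_nonneg _ _ hexp]
        ring

end Potential

section SymmetricKernel

theorem mul_le_rpow_mul_rpow_add_rpow_mul_rpow (a b : ℝ≥0∞) {s : ℝ} (hs₀ : 0 ≤ s) (hs₁ : s ≤ 1) :
    a * b ≤ a ^ (2 - s) * b ^ s + b ^ (2 - s) * a ^ s := by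
  wlog hab : b ≤ a generalizing a b
  · rw [mul_comm, add_comm]
    exact this b a (le_of_not_ge hab)
  have hb : b = b ^ (1 - s) * b ^ s := by
    rw [← ENNReal.rpow_add_of_nonneg _ _ (by linarith) hs₀, sub_add_cancel, ENNReal.rpow_one]
  have ha : a ^ (2 - s) = a * a ^ (1 - s) := by
    nth_rewrite 2 [← ENNReal.rpow_one a]
    rw [← ENNReal.rpow_add_of_nonneg _ _ zero_le_one (by linarith)]
    ring_nf
  calc a * b = a * b ^ (1 - s) * b ^ s := by rw [mul_assoc, ← hb]
    _ ≤ a * a ^ (1 - s) * b ^ s := by gcongr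
    _ ≤ a ^ (2 - s) * b ^ s + b ^ (2 - s) * a ^ s := by
      rw [← ha]
      exact le_self_add

variable {α : Type*} [MeasurableSpace α] {μ : Measure α}

theorem lintegral_lintegral_mul_mul_symm_kernel_le [SFinite μ] {k : α → α → ℝ≥0∞}
    (hk : Measurable (Function.uncurry k)) (hsymm : ∀ x y, k x y = k y x) {f : α → ℝ≥0∞}
    (hf : Measurable f) {s : ℝ} (hs₀ : 0 ≤ s) (hs₁ : s ≤ 1) {B : ℝ≥0∞}
    (hB : ∀ x, ∫⁻ y, f y ^ s * k x y ∂μ ≤ B) :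
    ∫⁻ x, ∫⁻ y, f x * f y * k x y ∂μ ∂μ ≤ 2 * (∫⁻ x, f x ^ (2 - s) ∂μ) * B := by
  let P (x y : α) : ℝ≥0∞ := f x ^ (2 - s) * (f y ^ s * k x y)
  have hP : Measurable (Function.uncurry P) := by
    simp only [P, Function.uncurry_def]
    fun_prop
  have hswap : ∫⁻ x, ∫⁻ y, P y x ∂μ ∂μ = ∫⁻ x, ∫⁻ y, P x y ∂μ ∂μ :=
    lintegral_lintegral_swap (hP.comp measurable_swap).aemeasurable
  have hP_le : ∫⁻ x, ∫⁻ y, P x y ∂μ ∂μ ≤ (∫⁻ x, f x ^ (2 - s) ∂μ) * B := by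
    rw [← lintegral_mul_const _ (by fun_prop)]
    refine lintegral_mono fun x => ?_
    have hkx : Measurable (k x) := hk.comp measurable_prodMk_left
    rw [lintegral_const_mul _ (by fun_prop)]
    gcongr
    exact hB x
  calc ∫⁻ x, ∫⁻ y, f x * f y * k x y ∂μ ∂μ ≤ ∫⁻ x, ∫⁻ y, P x y + P y x ∂μ ∂μ := by
        refine lintegral_mono fun x => lintegral_mono fun y => ?_
        calc f x * f y * k x y
            ≤ (f x ^ (2 - s) * f y ^ s + f y ^ (2 - s) * f x ^ s) * k x y := by
              gcongr
              exact mul_le_rpow_mul_rpow_add_rpow_mul_rpow _ _ hs₀ hs₁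
          _ = P x y + P y x := by simp only [P, hsymm y x]; ring
    _ = ∫⁻ x, ∫⁻ y, P x y ∂μ ∂μ + ∫⁻ x, ∫⁻ y, P y x ∂μ ∂μ := by
        rw [← lintegral_add_left hP.lintegral_prod_right]
        exact lintegral_congr fun x => lintegral_add_left (hP.comp measurable_prodMk_left) _
    _ ≤ 2 * (∫⁻ x, f x ^ (2 - s) ∂μ) * B := by
        rw [hswap, ← two_mul, mul_assoc]
        gcongr

theorem lintegral_rpow_add_mul_le {f : α → ℝ≥0∞} (hf : AEMeasurable f μ) {a b p q : ℝ}
    (ha : 0 ≤ a) (hb : 0 ≤ b) (hp : 0 ≤ p) (hq : 0 ≤ q) (hpq : p + q = 1) :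
    ∫⁻ x, f x ^ (a * p + b * q) ∂μ ≤ (∫⁻ x, f x ^ a ∂μ) ^ p * (∫⁻ x, f x ^ b ∂μ) ^ q := by
  refine le_of_eq_of_le (lintegral_congr fun x => ?_)
    (ENNReal.lintegral_mul_norm_pow_le (hf.pow_const a) (hf.pow_const b) hp hq hpq)
  rw [ENNReal.rpow_add_of_nonneg _ _ (mul_nonneg ha hp) (mul_nonneg hb hq), ENNReal.rpow_mul,
    ENNReal.rpow_mul]

end SymmetricKernel

section Energy

open Module

variable {E V F : Type*} [NormedAddCommGroup E] [NormedSpace ℝ E]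
  [MeasurableSpace E] [BorelSpace E] [NormedAddCommGroup V] [NormedSpace ℝ V] [CompleteSpace V]
  [NormedAddCommGroup F] [InnerProductSpace ℝ F] (μ : Measure E)

theorem exists_lintegral_lintegral_enorm_mul_inv_enorm_sub_le [FiniteDimensional ℝ E]
    [μ.IsAddHaarMeasure] (hd : 1 < finrank ℝ E) {s : ℝ}
    (hs₁ : s < 1) (hs : finrank ℝ E * (1 - s) < 1) :
    ∃ C ≠ ∞, ∀ w : E → V, Differentiable ℝ w → ∫⁻ x, ‖w x‖ₑ ∂μ ≠ ∞ →
      ∫⁻ x, ∫⁻ y, ‖w x‖ₑ * ‖w y‖ₑ * ‖x - y‖ₑ⁻¹ ∂μ ∂μ ≤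
        C * (∫⁻ x, ‖w x‖ₑ ^ (2 - s) ∂μ) *
          (∫⁻ x, ‖w x‖ₑ ∂μ) ^ (((finrank ℝ E : ℝ) - 1) * (1 - s)) *
            (∫⁻ x, ‖fderiv ℝ w x‖ₑ ∂μ) ^ (1 - finrank ℝ E * (1 - s)) := by
  obtain ⟨C, hC, hpot⟩ := exists_lintegral_enorm_rpow_mul_inv_enorm_sub_le (V := V) μ hd hs₁ hs
  have hd' : 1 < (finrank ℝ E : ℝ) := by exact_mod_cast hd
  have hs₀ : 0 ≤ s := by nlinarith
  refine ⟨2 * C, by finiteness, fun w hw hfin => ?_⟩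
  have hkernel : Measurable (Function.uncurry fun x y : E => ‖x - y‖ₑ⁻¹) := by
    simp only [Function.uncurry_def]
    fun_prop
  refine (lintegral_lintegral_mul_mul_symm_kernel_le hkernel
    (fun x y => by rw [enorm_sub_rev]) hw.continuous.enorm.measurable hs₀ hs₁.le
    (hpot w hw hfin)).trans_eq ?_
  ring

theorem lintegral_enorm_fderiv_norm_sq_le [CompleteSpace F] {u : E → F}
    (hu : Differentiable ℝ u) :
    ∫⁻ x, ‖fderiv ℝ (fun x => ‖u x‖ ^ 2) x‖ₑ ∂μ ≤
      2 * (∫⁻ x, ‖u x‖ₑ ^ 2 ∂μ) ^ (1 / 2 : ℝ) *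
        (∫⁻ x, ‖fderiv ℝ u x‖ₑ ^ 2 ∂μ) ^ (1 / 2 : ℝ) := by
  have hu_meas : Measurable fun x => ‖u x‖ₑ := hu.continuous.enorm.measurable
  have hdu_meas : Measurable fun x => ‖fderiv ℝ u x‖ₑ := (measurable_fderiv ℝ u).enorm
  have hpointwise (x : E) :
      ‖fderiv ℝ (fun x => ‖u x‖ ^ 2) x‖ₑ ≤ 2 * (‖u x‖ₑ * ‖fderiv ℝ u x‖ₑ) := by
    rw [(hu x).hasFDerivAt.norm_sq.fderiv]
    have hnorm : ‖2 • (innerSL ℝ (u x)).comp (fderiv ℝ u x)‖ ≤ 2 * (‖u x‖ * ‖fderiv ℝ u x‖) := by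
      refine (norm_nsmul_le).trans ?_
      rw [← innerSL_apply_norm ℝ (u x)]
      push_cast
      gcongr
      exact ContinuousLinearMap.opNorm_comp_le _ _
    rw [← ofReal_norm, ← ofReal_norm, ← ofReal_norm, ← ENNReal.ofReal_mul (norm_nonneg _),
      ← ENNReal.ofReal_ofNat, ← ENNReal.ofReal_mul zero_le_two]
    exact ENNReal.ofReal_le_ofReal hnorm
  calc ∫⁻ x, ‖fderiv ℝ (fun x => ‖u x‖ ^ 2) x‖ₑ ∂μ
      ≤ ∫⁻ x, 2 * (‖u x‖ₑ * ‖fderiv ℝ u x‖ₑ) ∂μ := lintegral_mono hpointwise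
    _ = 2 * ∫⁻ x, ‖u x‖ₑ * ‖fderiv ℝ u x‖ₑ ∂μ := lintegral_const_mul _ (by fun_prop)
    _ ≤ _ := by
      rw [mul_assoc]
      gcongr
      simpa using ENNReal.lintegral_mul_le_Lp_mul_Lq μ Real.HolderConjugate.two_two
        hu_meas.aemeasurable hdu_meas.aemeasurable

theorem exists_lintegral_lintegral_enorm_sq_mul_inv_enorm_sub_le_of_finrank_eq_two
    [FiniteDimensional ℝ E] [μ.IsAddHaarMeasure] [CompleteSpace F] (hE : finrank ℝ E = 2) {q : ℝ}
    (hq₁ : 2 < q) (hq₂ : q < 4) :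
    ∃ C ≠ ∞, ∀ u : E → F, Differentiable ℝ u → ∫⁻ x, ‖u x‖ₑ ^ 2 ∂μ ≠ ∞ →
      ∫⁻ x, ∫⁻ y, ‖u x‖ₑ ^ 2 * ‖u y‖ₑ ^ 2 * ‖x - y‖ₑ⁻¹ ∂μ ∂μ ≤
        C * ((∫⁻ x, ‖u x‖ₑ ^ q ∂μ) ^ (2 / q) *
          (∫⁻ x, ‖fderiv ℝ u x‖ₑ ^ 2 ∂μ) ^ ((4 - q) / (2 * q)) *
            (∫⁻ x, ‖u x‖ₑ ^ 2 ∂μ) ^ ((3 * q - 4) / (2 * q))) := by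
  have hq₀ : 0 < q := by linarith
  have hs₁ : 2 / q < 1 := by rwa [div_lt_one hq₀]
  have hs : 1 < 4 / q := by rwa [one_lt_div hq₀]
  have hs' : 4 / q = 2 * (2 / q) := by ring
  obtain ⟨C, hC, henergy⟩ := exists_lintegral_lintegral_enorm_mul_inv_enorm_sub_le (V := ℝ) μ
    (by rw [hE]; norm_num) hs₁ (by rw [hE]; push_cast; linarith)
  have hexp₁ : ((finrank ℝ E : ℝ) - 1) * (1 - 2 / q) = 1 - 2 / q := by rw [hE]; push_cast; ring
  have hexp₂ : 1 - finrank ℝ E * (1 - 2 / q) = 4 / q - 1 := by rw [hE]; push_cast; ring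
  rw [hexp₁, hexp₂] at henergy
  refine ⟨C * 2 ^ (4 / q - 1), by finiteness, fun u hu hM => ?_⟩
  have hsq (x : E) : ‖‖u x‖ ^ 2‖ₑ = ‖u x‖ₑ ^ 2 := by rw [enorm_pow, enorm_norm]
  have hw := henergy (fun x => ‖u x‖ ^ 2) (hu.norm_sq ℝ) (by simpa only [hsq] using hM)
  simp only [hsq] at hw
  set A := ∫⁻ x, ‖u x‖ₑ ^ q ∂μ
  set G := ∫⁻ x, ‖fderiv ℝ u x‖ₑ ^ 2 ∂μ
  set M := ∫⁻ x, ‖u x‖ₑ ^ 2 ∂μ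
  have hlyapunov : ∫⁻ x, (‖u x‖ₑ ^ 2) ^ (2 - 2 / q) ∂μ ≤ M ^ (1 - 2 / q) * A ^ (2 / q) := by
    have h := lintegral_rpow_add_mul_le (μ := μ) hu.continuous.enorm.measurable.aemeasurable
      zero_le_two hq₀.le (sub_nonneg.2 hs₁.le) (by positivity) (sub_add_cancel 1 (2 / q))
    have hexp : 2 * (1 - 2 / q) + q * (2 / q) = 2 * (2 - 2 / q) := by field_simp; ring
    simpa only [hexp, ENNReal.rpow_mul, ENNReal.rpow_two] using h
  have hM_exp : M ^ ((3 * q - 4) / (2 * q)) =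
      M ^ (1 - 2 / q) * M ^ (1 - 2 / q) * M ^ (1 / 2 * (4 / q - 1)) := by
    rw [← ENNReal.rpow_add_of_nonneg _ _ (by linarith) (by linarith),
      ← ENNReal.rpow_add_of_nonneg _ _ (by linarith) (by linarith)]
    congr 1
    field_simp
    ring
  have hG_exp : (4 - q) / (2 * q) = 1 / 2 * (4 / q - 1) := by field_simp
  calc ∫⁻ x, ∫⁻ y, ‖u x‖ₑ ^ 2 * ‖u y‖ₑ ^ 2 * ‖x - y‖ₑ⁻¹ ∂μ ∂μ
      ≤ C * (M ^ (1 - 2 / q) * A ^ (2 / q)) * M ^ (1 - 2 / q) *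
          (2 * M ^ (1 / 2 : ℝ) * G ^ (1 / 2 : ℝ)) ^ (4 / q - 1) := by
        refine hw.trans ?_
        gcongr
        exact lintegral_enorm_fderiv_norm_sq_le μ hu
    _ = C * 2 ^ (4 / q - 1) *
          (A ^ (2 / q) * G ^ ((4 - q) / (2 * q)) * M ^ ((3 * q - 4) / (2 * q))) := by
        rw [hM_exp, hG_exp, ENNReal.mul_rpow_of_nonneg _ _ (by linarith),
          ENNReal.mul_rpow_of_nonneg _ _ (by linarith), ← ENNReal.rpow_mul, ← ENNReal.rpow_mul]
        ring

end Energy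

section Young

theorem rpow_mul_rpow_mul_rpow_le_add (a b c : ℝ≥0∞) {p₁ p₂ p₃ : ℝ} (hp₁ : 0 ≤ p₁) (hp₂ : 0 ≤ p₂)
    (hp₃ : 0 ≤ p₃) (hp : p₁ + p₂ + p₃ = 1) : a ^ p₁ * b ^ p₂ * c ^ p₃ ≤ a + b + c :=
  calc a ^ p₁ * b ^ p₂ * c ^ p₃
      ≤ (a + b + c) ^ p₁ * (a + b + c) ^ p₂ * (a + b + c) ^ p₃ := by
        gcongr
        · exact le_add_right le_self_add
        · exact le_add_right le_add_self
        · exact le_add_self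
    _ = a + b + c := by
      rw [← ENNReal.rpow_add_of_nonneg _ _ hp₁ hp₂,
        ← ENNReal.rpow_add_of_nonneg _ _ (add_nonneg hp₁ hp₂) hp₃, hp, ENNReal.rpow_one]

theorem exists_mul_rpow_mul_rpow_mul_rpow_le {K : ℝ≥0∞} (hK : K ≠ ∞) {p₁ p₂ p₃ : ℝ} (hp₁ : 0 ≤ p₁)
    (hp₂ : 0 ≤ p₂) (hp₃ : 0 < p₃) (hp : p₁ + p₂ + p₃ = 1) {δ₁ δ₂ : ℝ} (hδ₁ : 0 < δ₁)
    (hδ₂ : 0 < δ₂) :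
    ∃ L > (0 : ℝ), ∀ a b c : ℝ≥0∞, K * (a ^ p₁ * b ^ p₂ * c ^ p₃) ≤
      ENNReal.ofReal δ₁ * a + ENNReal.ofReal δ₂ * b + ENNReal.ofReal L * c := by
  set d₁ := ENNReal.ofReal δ₁
  set d₂ := ENNReal.ofReal δ₂
  have hd₁ : d₁ ≠ 0 := by simpa [d₁] using hδ₁
  have hd₂ : d₂ ≠ 0 := by simpa [d₂] using hδ₂
  have hd₁_top : d₁ ≠ ∞ := ENNReal.ofReal_ne_top
  have hd₂_top : d₂ ≠ ∞ := ENNReal.ofReal_ne_top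
  set L := K * d₁ ^ (-p₁) * d₂ ^ (-p₂)
  have hL : L ≠ ∞ := by finiteness
  have hL_le : L ≤ ENNReal.ofReal ((L ^ p₃⁻¹).toReal + 1) ^ p₃ := by
    calc L = (L ^ p₃⁻¹) ^ p₃ := by
          rw [← ENNReal.rpow_mul, inv_mul_cancel₀ hp₃.ne', ENNReal.rpow_one]
      _ ≤ ENNReal.ofReal ((L ^ p₃⁻¹).toReal + 1) ^ p₃ := by
        gcongr
        exact ENNReal.le_ofReal_iff_toReal_le (by finiteness) (by positivity) |>.2 (by linarith)
  refine ⟨(L ^ p₃⁻¹).toReal + 1, by positivity, fun a b c => ?_⟩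
  have hcancel : K = d₁ ^ p₁ * d₂ ^ p₂ * L :=
    calc K = (d₁ ^ p₁ * d₁ ^ (-p₁)) * (d₂ ^ p₂ * d₂ ^ (-p₂)) * K := by
          rw [← ENNReal.rpow_add _ _ hd₁ hd₁_top, ← ENNReal.rpow_add _ _ hd₂ hd₂_top]
          simp
      _ = d₁ ^ p₁ * d₂ ^ p₂ * L := by simp only [L]; ring
  calc K * (a ^ p₁ * b ^ p₂ * c ^ p₃)
      ≤ d₁ ^ p₁ * d₂ ^ p₂ * ENNReal.ofReal ((L ^ p₃⁻¹).toReal + 1) ^ p₃ *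
          (a ^ p₁ * b ^ p₂ * c ^ p₃) := by rw [hcancel]; gcongr
    _ = (d₁ * a) ^ p₁ * (d₂ * b) ^ p₂ * (ENNReal.ofReal ((L ^ p₃⁻¹).toReal + 1) * c) ^ p₃ := by
      rw [ENNReal.mul_rpow_of_nonneg _ _ hp₁, ENNReal.mul_rpow_of_nonneg _ _ hp₂,
        ENNReal.mul_rpow_of_nonneg _ _ hp₃.le]
      ring
    _ ≤ _ := rpow_mul_rpow_mul_rpow_le_add _ _ _ hp₁ hp₂ hp₃.le hp

end Young

section LogKernel

variable {E : Type*} [NormedAddCommGroup E]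

theorem ofReal_log_one_add_div_norm_le {a : ℝ} (ha : 0 ≤ a) (z : E) :
    ENNReal.ofReal (Real.log (1 + a / ‖z‖)) ≤ ENNReal.ofReal a * ‖z‖ₑ⁻¹ := by
  rcases eq_or_ne z 0 with rfl | hz
  · simp
  have hz' : 0 < ‖z‖ := norm_pos_iff.2 hz
  have hlog : Real.log (1 + a / ‖z‖) ≤ a / ‖z‖ := by
    linarith [Real.log_le_sub_one_of_pos (x := 1 + a / ‖z‖) (by positivity)]
  rw [← ofReal_norm, ← div_eq_mul_inv, ← ENNReal.ofReal_div_of_pos hz']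
  exact ENNReal.ofReal_le_ofReal hlog

theorem lintegral_lintegral_log_one_add_div_norm_sub_mul_le [MeasurableSpace E] {F : Type*}
    [NormedAddCommGroup F] (μ : Measure E) {a : ℝ} (ha : 0 ≤ a) (u : E → F) :
    ∫⁻ x, ∫⁻ y, ENNReal.ofReal (Real.log (1 + a / ‖x - y‖) * ‖u x‖ ^ 2 * ‖u y‖ ^ 2) ∂μ ∂μ ≤
      ENNReal.ofReal a * ∫⁻ x, ∫⁻ y, ‖u x‖ₑ ^ 2 * ‖u y‖ₑ ^ 2 * ‖x - y‖ₑ⁻¹ ∂μ ∂μ := by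
  rw [← lintegral_const_mul' _ _ ENNReal.ofReal_ne_top]
  refine lintegral_mono fun x => ?_
  rw [← lintegral_const_mul' _ _ ENNReal.ofReal_ne_top]
  refine lintegral_mono fun y => ?_
  calc ENNReal.ofReal (Real.log (1 + a / ‖x - y‖) * ‖u x‖ ^ 2 * ‖u y‖ ^ 2)
      = ENNReal.ofReal (Real.log (1 + a / ‖x - y‖)) * ‖u x‖ₑ ^ 2 * ‖u y‖ₑ ^ 2 := by
        rw [ENNReal.ofReal_mul' (by positivity), ENNReal.ofReal_mul' (by positivity),
          ENNReal.ofReal_pow (norm_nonneg _), ENNReal.ofReal_pow (norm_nonneg _), ofReal_norm,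
          ofReal_norm]
    _ ≤ ENNReal.ofReal a * ‖x - y‖ₑ⁻¹ * ‖u x‖ₑ ^ 2 * ‖u y‖ₑ ^ 2 := by
        gcongr
        exact ofReal_log_one_add_div_norm_le ha _
    _ = ENNReal.ofReal a * (‖u x‖ₑ ^ 2 * ‖u y‖ₑ ^ 2 * ‖x - y‖ₑ⁻¹) := by ring

end LogKernel

theorem stmt_19_general {E F : Type*} [NormedAddCommGroup E] [NormedSpace ℝ E]
    [MeasurableSpace E] [BorelSpace E] [NormedAddCommGroup F] [InnerProductSpace ℝ F]
    [CompleteSpace F] (μ : Measure E) [μ.IsAddHaarMeasure] (hE : Module.finrank ℝ E = 2) {q : ℝ}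
    (hq₁ : 2 < q) (hq₂ : q < 4) {δ₁ δ₂ : ℝ} (hδ₁ : 0 < δ₁) (hδ₂ : 0 < δ₂) :
    ∃ L > (0 : ℝ), ∀ u : E → F, Differentiable ℝ u →
      ∫⁻ x, ∫⁻ y, ENNReal.ofReal (Real.log (1 + 2 / ‖x - y‖) * ‖u x‖ ^ 2 * ‖u y‖ ^ 2) ∂μ ∂μ ≤
        ENNReal.ofReal δ₁ * (∫⁻ x, ENNReal.ofReal (‖u x‖ ^ q) ∂μ) ^ 2
          + ENNReal.ofReal δ₂ * ∫⁻ x, ENNReal.ofReal (‖fderiv ℝ u x‖ ^ 2) ∂μ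
          + ENNReal.ofReal L *
            (∫⁻ x, ENNReal.ofReal (‖u x‖ ^ 2) ∂μ) ^ ((3 * q - 4) / (3 * (q - 2))) := by
  have : FiniteDimensional ℝ E := Module.finite_of_finrank_pos (by omega)
  have hq₀ : 0 < q := by linarith
  have : 0 < q - 2 := by linarith
  obtain ⟨C, hC, henergy⟩ :=
    exists_lintegral_lintegral_enorm_sq_mul_inv_enorm_sub_le_of_finrank_eq_two (F := F) μ hE hq₁ hq₂
  obtain ⟨L, hL, hyoung⟩ := exists_mul_rpow_mul_rpow_mul_rpow_le
    (K := ENNReal.ofReal 2 * C) (p₁ := 1 / q) (p₂ := (4 - q) / (2 * q))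
    (p₃ := 3 * (q - 2) / (2 * q)) (by finiteness) (by positivity)
    (div_nonneg (by linarith) (by positivity)) (by positivity) (by field_simp; ring) hδ₁ hδ₂
  refine ⟨L, hL, fun u hu => ?_⟩
  simp only [← ENNReal.ofReal_rpow_of_nonneg (norm_nonneg _) hq₀.le, ENNReal.ofReal_pow,
    norm_nonneg, ofReal_norm]
  set A := ∫⁻ x, ‖u x‖ₑ ^ q ∂μ
  set G := ∫⁻ x, ‖fderiv ℝ u x‖ₑ ^ 2 ∂μ
  rcases eq_or_ne (∫⁻ x, ‖u x‖ₑ ^ 2 ∂μ) ∞ with hM | hM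
  · rw [hM, ENNReal.top_rpow_of_pos (div_pos (by linarith) (by linarith)),
      ENNReal.mul_top (by simpa using hL)]
    simp
  set M := ∫⁻ x, ‖u x‖ₑ ^ 2 ∂μ
  have hA_pow : (A ^ 2) ^ (1 / q) = A ^ (2 / q) := by
    rw [← ENNReal.rpow_two, ← ENNReal.rpow_mul, mul_one_div]
  have hM_pow : (M ^ ((3 * q - 4) / (3 * (q - 2)))) ^ (3 * (q - 2) / (2 * q)) =
      M ^ ((3 * q - 4) / (2 * q)) := by
    rw [← ENNReal.rpow_mul, div_mul_div_cancel₀ (by positivity)]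
  calc _ ≤ ENNReal.ofReal 2 * ∫⁻ x, ∫⁻ y, ‖u x‖ₑ ^ 2 * ‖u y‖ₑ ^ 2 * ‖x - y‖ₑ⁻¹ ∂μ ∂μ :=
        lintegral_lintegral_log_one_add_div_norm_sub_mul_le μ zero_le_two u
    _ ≤ ENNReal.ofReal 2 * (C * (A ^ (2 / q) * G ^ ((4 - q) / (2 * q)) *
          M ^ ((3 * q - 4) / (2 * q)))) := by
        gcongr
        exact henergy u hu hM
    _ ≤ _ := by
        rw [← mul_assoc, ← hA_pow, ← hM_pow]
        exact hyoung _ _ _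

theorem stmt_19 (q : ℝ) (hq1 : 2 < q) (hq2 : q < 4) :
    ∃ C > (0 : ℝ), ∀ ε > (0 : ℝ), ∃ Cε > (0 : ℝ),
      ∀ u : EuclideanSpace ℝ (Fin 2) → ℝ, Measurable u → Differentiable ℝ u →
        (∫⁻ x, ∫⁻ y, ENNReal.ofReal
            (Real.log (1 + 2 / ‖x - y‖) * (u x) ^ 2 * (u y) ^ 2)) ≤
          ENNReal.ofReal (C * ε ^ q) *
              (∫⁻ x, ENNReal.ofReal (|u x| ^ q)) ^ (2 : ℕ)
            + ENNReal.ofReal (C * ε ^ ((5 * q - 2) * (q - 2) / ((4 - q) * (q - 1)))) *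
              (∫⁻ x, ENNReal.ofReal (‖fderiv ℝ u x‖ ^ 2))
            + ENNReal.ofReal Cε *
              (∫⁻ x, ENNReal.ofReal ((u x) ^ 2)) ^ ((3 * q - 4) / (3 * (q - 2)) : ℝ) := by
  refine ⟨1, one_pos, fun ε hε => ?_⟩
  obtain ⟨L, hL, hbound⟩ := stmt_19_general (F := ℝ) volume finrank_euclideanSpace_fin hq1 hq2
    (Real.rpow_pos_of_pos hε q)
    (Real.rpow_pos_of_pos hε ((5 * q - 2) * (q - 2) / ((4 - q) * (q - 1))))
  exact ⟨L, hL, fun u _ hu => by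
    simpa only [Real.norm_eq_abs, sq_abs, one_mul] using hbound u hu⟩
end
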